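/- Suppose β ∈ ℝ is such that for every choice of points ξ_2, …, ξ_K ∈ ℝ^K, the strictly lower triangular matrix H(ξ) ∈ ℝ^{K×K} with (k,j) entry ∂²g/∂x_k∂x_j (ξ_k) for j < k and 0 for j ≥ k has spectral norm ‖H(ξ)‖ ≤ β. Then the cyclic coordinate gradient descent iterates satisfy, for all r ≥ 1, g(x^{(r)}) − g(x*) ≤ 2 (P_max + β²/P_min) R_0² / r. -/

import Mathlib

open Finset

/-- Squared Euclidean norm of a vector in `ℝ^n`. -/
noncomputable def sqnorm {n : ℕ} (v : Fin n → ℝ) : ℝ := ∑ i, v i ^ 2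

/-- The partial derivative `∂_k g (x)`. -/
noncomputable def pder {K : ℕ} (g : (Fin K → ℝ) → ℝ) (k : Fin K) (x : Fin K → ℝ) : ℝ :=
  fderiv ℝ g x (Pi.single k 1)

/-- The second partial derivative `∂²g/∂x_i∂x_j (x) = ∂_i (∂_j g) (x)`. -/
noncomputable def pder2 {K : ℕ} (g : (Fin K → ℝ) → ℝ) (i j : Fin K) (x : Fin K → ℝ) : ℝ :=
  fderiv ℝ (fun y => fderiv ℝ g y (Pi.single j 1)) x (Pi.single i 1)

/-- One cycle of cyclic coordinate gradient descent (CGD) from `x` with stepsizes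
`1/P_k`: `w_1 = x`, `w_{k+1} = w_k − (1/P_k) ∂_k g(w_k) e_k`, and `x' = w_{K+1}`. -/
def CGDCycle {K : ℕ} (g : (Fin K → ℝ) → ℝ) (P : Fin K → ℝ)
    (x : Fin K → ℝ) (w : Fin (K + 1) → Fin K → ℝ) (x' : Fin K → ℝ) : Prop :=
  w 0 = x ∧
  (∀ k : Fin K, w k.succ =
    w k.castSucc - ((P k)⁻¹ * pder g k (w k.castSucc)) • (Pi.single k 1 : Fin K → ℝ)) ∧
  x' = w (Fin.last K)

/-- Maximum of a finite family of reals indexed by `Fin K`, `K ≥ 1`. -/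
noncomputable def maxOf {K : ℕ} (hK : 1 ≤ K) (P : Fin K → ℝ) : ℝ :=
  Finset.univ.sup' (Finset.univ_nonempty_iff.mpr ⟨⟨0, hK⟩⟩) P

/-- Minimum of a finite family of reals indexed by `Fin K`, `K ≥ 1`. -/
noncomputable def minOf {K : ℕ} (hK : 1 ≤ K) (P : Fin K → ℝ) : ℝ :=
  Finset.univ.inf' (Finset.univ_nonempty_iff.mpr ⟨⟨0, hK⟩⟩) P

/-- Spectral (ℓ2 operator) norm of a real `K × K` matrix, characterized as the
maximum of `‖Hv‖` over unit vectors `v`. -/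
noncomputable def specNorm {K : ℕ} (H : Matrix (Fin K) (Fin K) ℝ) : ℝ :=
  sSup {r : ℝ | ∃ v : Fin K → ℝ, sqnorm v = 1 ∧ r = Real.sqrt (sqnorm (H.mulVec v))}

/-- The "moving-iterate Hessian" `H(ξ)`: the strictly lower triangular matrix
whose `(k,j)` entry, for `j < k`, is `∂²g/∂x_k∂x_j (ξ_k)`, and `0` otherwise. -/
noncomputable def Hmat {K : ℕ} (g : (Fin K → ℝ) → ℝ) (ξ : Fin K → Fin K → ℝ) :
    Matrix (Fin K) (Fin K) ℝ :=
  Matrix.of fun k j => if j < k then pder2 g k j (ξ k) else 0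

/-!
Write `u` for the displacement of a cycle starting at `x`. The mean value theorem, applied between
`x` and each intermediate point, gives `∇g(x) = -P u - H(ξ) u` for suitable `ξ`, while the
coordinate-wise Lipschitz bounds give the sufficient decrease `‖u‖_P² ≤ 2 (g(x) - g(x'))`.
Bounding the whole gradient by Cauchy-Schwarz would lose a factor two in the rate. Instead the
contribution of `-P u` to the convexity inequality at `x` telescopes as a difference of squared
weighted distances to the minimizer, as in the analysis of gradient descent, and only the
contribution of `-H(ξ) u` is estimated through the decrease of `g`. A Lyapunov function
with quadratically growing weight on `g(x) - g(x*)` then gives the rate; it needs an initial gap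
that is linear in `β`, which comes from expanding `g` along the coordinate path from `x*`.
-/

section Quadratic

variable {n : ℕ}

/-- The squared Euclidean norm weighted by `P`; the stepsize parameters `P_k` turn it into the
metric in which a CGD cycle is analysed. -/
def weightedSqnorm (P v : Fin n → ℝ) : ℝ := ∑ i, P i * v i ^ 2

lemma sqnorm_nonneg (v : Fin n → ℝ) : 0 ≤ sqnorm v :=
  sum_nonneg fun _ _ => sq_nonneg _

lemma sqnorm_smul (c : ℝ) (v : Fin n → ℝ) : sqnorm (c • v) = c ^ 2 * sqnorm v := by
  simp [sqnorm, mul_pow, mul_sum]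

lemma sq_le_sqnorm (v : Fin n → ℝ) (i : Fin n) : v i ^ 2 ≤ sqnorm v :=
  single_le_sum (f := fun i => v i ^ 2) (fun _ _ => sq_nonneg _) (mem_univ i)

lemma abs_dotProduct_le_sqrt_sqnorm_mul (v u : Fin n → ℝ) :
    |v ⬝ᵥ u| ≤ √(sqnorm v) * √(sqnorm u) := by
  rw [← Real.sqrt_mul (sqnorm_nonneg v)]
  exact Real.abs_le_sqrt (sum_mul_sq_le_sq_mul_sq univ v u)

lemma weightedSqnorm_nonneg {P : Fin n → ℝ} (hP : ∀ i, 0 ≤ P i) (v : Fin n → ℝ) :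
    0 ≤ weightedSqnorm P v :=
  sum_nonneg fun i _ => mul_nonneg (hP i) (sq_nonneg _)

lemma weightedSqnorm_le {P : Fin n → ℝ} {q : ℝ} (hP : ∀ i, P i ≤ q) (v : Fin n → ℝ) :
    weightedSqnorm P v ≤ q * sqnorm v := by
  rw [sqnorm, mul_sum]
  exact sum_le_sum fun i _ => mul_le_mul_of_nonneg_right (hP i) (sq_nonneg _)

lemma le_weightedSqnorm {P : Fin n → ℝ} {p : ℝ} (hP : ∀ i, p ≤ P i) (v : Fin n → ℝ) :
    p * sqnorm v ≤ weightedSqnorm P v := by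
  rw [sqnorm, mul_sum]
  exact sum_le_sum fun i _ => mul_le_mul_of_nonneg_right (hP i) (sq_nonneg _)

lemma weightedSqnorm_add (P v u : Fin n → ℝ) :
    weightedSqnorm P (v + u) =
      weightedSqnorm P v + 2 * (v ⬝ᵥ (P * u)) + weightedSqnorm P u := by
  simp only [weightedSqnorm, dotProduct, mul_sum, ← sum_add_distrib]
  refine sum_congr rfl fun i _ => ?_
  simp only [Pi.add_apply, Pi.mul_apply]
  ring

lemma specNorm_nonneg (A : Matrix (Fin n) (Fin n) ℝ) : 0 ≤ specNorm A := by
  refine Real.sSup_nonneg ?_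
  rintro _ ⟨v, -, rfl⟩
  exact Real.sqrt_nonneg _

lemma sqnorm_mulVec_le_sum_sq_mul (A : Matrix (Fin n) (Fin n) ℝ) (v : Fin n → ℝ) :
    sqnorm (A.mulVec v) ≤ (∑ i, ∑ j, A i j ^ 2) * sqnorm v := by
  rw [sqnorm, sum_mul]
  exact sum_le_sum fun i _ => sum_mul_sq_le_sq_mul_sq univ (A i) v

lemma sqrt_sqnorm_mulVec_le_specNorm (A : Matrix (Fin n) (Fin n) ℝ) {v : Fin n → ℝ}
    (hv : sqnorm v = 1) : √(sqnorm (A.mulVec v)) ≤ specNorm A := by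
  refine le_csSup ⟨√(∑ i, ∑ j, A i j ^ 2), ?_⟩ ⟨v, hv, rfl⟩
  rintro _ ⟨w, hw, rfl⟩
  exact Real.sqrt_le_sqrt (by simpa [hw] using sqnorm_mulVec_le_sum_sq_mul A w)

lemma sqrt_sqnorm_mulVec_le (A : Matrix (Fin n) (Fin n) ℝ) (v : Fin n → ℝ) :
    √(sqnorm (A.mulVec v)) ≤ specNorm A * √(sqnorm v) := by
  rcases (sqnorm_nonneg v).eq_or_lt with hv | hv
  · have h := sqnorm_mulVec_le_sum_sq_mul A v
    rw [← hv, mul_zero] at h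
    rw [← hv, Real.sqrt_eq_zero_of_nonpos h, Real.sqrt_zero, mul_zero]
  · have hs : 0 < √(sqnorm v) := Real.sqrt_pos.mpr hv
    have hunit : sqnorm ((√(sqnorm v))⁻¹ • v) = 1 := by
      rw [sqnorm_smul, inv_pow, Real.sq_sqrt hv.le, inv_mul_cancel₀ hv.ne']
    have h := sqrt_sqnorm_mulVec_le_specNorm A hunit
    rwa [Matrix.mulVec_smul, sqnorm_smul, Real.sqrt_mul (sq_nonneg _),
      Real.sqrt_sq (inv_nonneg.mpr hs.le), inv_mul_le_iff₀ hs, mul_comm] at h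

lemma abs_dotProduct_mulVec_le (A : Matrix (Fin n) (Fin n) ℝ) (v u : Fin n → ℝ) :
    |v ⬝ᵥ A.mulVec u| ≤ specNorm A * √(sqnorm v) * √(sqnorm u) :=
  calc |v ⬝ᵥ A.mulVec u| ≤ √(sqnorm v) * √(sqnorm (A.mulVec u)) :=
        abs_dotProduct_le_sqrt_sqnorm_mul v _
    _ ≤ √(sqnorm v) * (specNorm A * √(sqnorm u)) := by
        gcongr
        exact sqrt_sqnorm_mulVec_le A u
    _ = specNorm A * √(sqnorm v) * √(sqnorm u) := by ring

end Quadratic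

section Calculus

lemma add_fderiv_le_of_convexOn {E : Type*} [NormedAddCommGroup E] [NormedSpace ℝ E] {f : E → ℝ}
    (hf : ConvexOn ℝ Set.univ f) {x : E} (hx : DifferentiableAt ℝ f x) (y : E) :
    f x + fderiv ℝ f x (y - x) ≤ f y := by
  have hline : HasDerivAt (f ∘ AffineMap.lineMap x y) (fderiv ℝ f x (y - x)) (0 : ℝ) :=
    HasFDerivAt.comp_hasDerivAt 0 (by simpa using hx.hasFDerivAt) AffineMap.hasDerivAt_lineMap
  have h := (hf.comp_affineMap (AffineMap.lineMap x y)).le_slope_of_hasDerivAt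
    (Set.mem_univ 0) (Set.mem_univ 1) one_pos hline
  simp only [slope_def_field, Function.comp_apply, AffineMap.lineMap_apply_zero,
    AffineMap.lineMap_apply_one, sub_zero, div_one] at h
  linarith

lemma le_quadratic_of_abs_deriv_sub_le {f f' : ℝ → ℝ} {M : ℝ}
    (hf : ∀ t, HasDerivAt f (f' t) t) (hf' : ∀ t, |f' t - f' 0| ≤ M * |t|) (t : ℝ) :
    f t ≤ f 0 + t * f' 0 + M / 2 * t ^ 2 := by
  let ψ : ℝ → ℝ := fun s => s * t * f' 0 + M / 2 * (s * t) ^ 2 - f (s * t)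
  have hψ (s : ℝ) : HasDerivAt ψ (t * f' 0 + M * s * t ^ 2 - f' (s * t) * t) s := by
    have hst : HasDerivAt (fun s : ℝ => s * t) t s := by simpa using (hasDerivAt_id s).mul_const t
    refine (((hst.mul_const (f' 0)).add ((hst.pow 2).const_mul (M / 2))).sub
      ((hf (s * t)).comp s hst)).congr_deriv ?_
    simp only [Nat.add_one_sub_one, pow_one, Nat.cast_ofNat]
    ring
  have hmono : MonotoneOn ψ (Set.Ici 0) := by
    refine monotoneOn_of_deriv_nonneg (convex_Ici 0)
      (fun s _ => (hψ s).continuousAt.continuousWithinAt)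
      (fun s _ => (hψ s).differentiableAt.differentiableWithinAt) fun s hs => ?_
    rw [interior_Ici, Set.mem_Ioi] at hs
    have h : (f' (s * t) - f' 0) * t ≤ M * s * t ^ 2 :=
      calc (f' (s * t) - f' 0) * t ≤ |f' (s * t) - f' 0| * |t| := by
            rw [← abs_mul]
            exact le_abs_self _
        _ ≤ M * |s * t| * |t| := by
            gcongr
            exact hf' _
        _ = M * s * t ^ 2 := by
            rw [abs_mul, abs_of_pos hs, ← sq_abs t]
            ring
    rw [(hψ s).deriv]
    linarith
  have h := hmono Set.self_mem_Ici (Set.mem_Ici.mpr zero_le_one) zero_le_one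
  simp only [ψ, zero_mul, one_mul] at h
  linarith

variable {K : ℕ} {g : (Fin K → ℝ) → ℝ}

lemma fderiv_apply_eq_dotProduct (g : (Fin K → ℝ) → ℝ) (x v : Fin K → ℝ) :
    fderiv ℝ g x v = v ⬝ᵥ (pder g · x) := by
  have hbasis (k : Fin K) : (fun j => if k = j then (1 : ℝ) else 0) = Pi.single k 1 := by
    ext j
    simp only [Pi.single_apply, eq_comm]
  rw [← ContinuousLinearMap.coe_coe, LinearMap.pi_apply_eq_sum_univ]
  simp only [hbasis, ContinuousLinearMap.coe_coe, smul_eq_mul, dotProduct, pder]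

lemma pder2_comm {x : Fin K → ℝ} (hg : ContDiffAt ℝ 2 g x) (i j : Fin K) :
    pder2 g i j x = pder2 g j i x := by
  have hd : DifferentiableAt ℝ (fderiv ℝ g) x :=
    (hg.fderiv_right (m := 1) (by norm_num)).differentiableAt (by norm_num)
  have hsymm := hg.isSymmSndFDerivAt (by simp)
  unfold pder2
  rw [fderiv_clm_apply hd (by fun_prop), fderiv_clm_apply hd (by fun_prop)]
  simpa using hsymm.eq _ _

lemma differentiable_pder (hg : ContDiff ℝ 2 g) (k : Fin K) : Differentiable ℝ (pder g k) :=
  ((hg.fderiv_right (m := 1) (by norm_num)).differentiable (by norm_num)).clm_apply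
    (differentiable_const _)

/-- The points visited while moving from `y` to `y + u` one coordinate at a time, in increasing
order: at stage `k : Fin (K + 1)` exactly the coordinates below `k` have been moved. -/
def coordPath (y u : Fin K → ℝ) (k : Fin (K + 1)) : Fin K → ℝ :=
  fun i => if i.castSucc < k then y i + u i else y i

@[simp]
lemma coordPath_zero (y u : Fin K → ℝ) : coordPath y u 0 = y := by
  ext i
  simp [coordPath]

@[simp]
lemma coordPath_last (y u : Fin K → ℝ) : coordPath y u (Fin.last K) = y + u := by
  ext i
  simp [coordPath, Fin.castSucc_lt_last]

lemma coordPath_succ (y u : Fin K → ℝ) (k : Fin K) :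
    coordPath y u k.succ = coordPath y u k.castSucc + u k • (Pi.single k 1 : Fin K → ℝ) := by
  ext i
  rcases lt_trichotomy i k with h | rfl | h
  · simp [coordPath, h, h.le, h.ne, Fin.castSucc_lt_succ_iff]
  · simp [coordPath]
  · simp [coordPath, h.not_gt, h.ne', Fin.castSucc_lt_succ_iff, h.not_ge]

/-- Coordinate-wise Lipschitz continuity of the partial derivatives, with constants `L k`. -/
def CoordLipschitz (g : (Fin K → ℝ) → ℝ) (L : Fin K → ℝ) : Prop :=
  ∀ (k : Fin K) (x : Fin K → ℝ) (t : ℝ),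
    |pder g k (x + t • (Pi.single k 1 : Fin K → ℝ)) - pder g k x| ≤ L k * |t|

lemma CoordLipschitz.mono {L P : Fin K → ℝ} (hL : CoordLipschitz g L) (hLP : ∀ k, L k ≤ P k) :
    CoordLipschitz g P := fun k x t =>
  (hL k x t).trans (mul_le_mul_of_nonneg_right (hLP k) (abs_nonneg t))

lemma CoordLipschitz.apply_add_single_le {P : Fin K → ℝ} (hL : CoordLipschitz g P)
    (hg : Differentiable ℝ g) (k : Fin K) (x : Fin K → ℝ) (t : ℝ) :
    g (x + t • (Pi.single k 1 : Fin K → ℝ)) ≤ g x + t * pder g k x + P k / 2 * t ^ 2 := by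
  have hline (s : ℝ) : HasDerivAt (fun s : ℝ => g (x + s • (Pi.single k 1 : Fin K → ℝ)))
      (pder g k (x + s • (Pi.single k 1 : Fin K → ℝ))) s :=
    (hg _).hasFDerivAt.comp_hasDerivAt s
      (by simpa using ((hasDerivAt_id s).smul_const _).const_add x)
  simpa using le_quadratic_of_abs_deriv_sub_le hline (by simpa using hL k x) t

lemma CoordLipschitz.apply_add_le_sum_coordPath {P : Fin K → ℝ} (hL : CoordLipschitz g P)
    (hg : Differentiable ℝ g) (y u : Fin K → ℝ) :
    g (y + u) ≤ g y + (∑ k, u k * pder g k (coordPath y u k.castSucc)) +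
      weightedSqnorm P u / 2 := by
  have htelescope : g y + ∑ k : Fin K, g (coordPath y u k.succ) =
      (∑ k : Fin K, g (coordPath y u k.castSucc)) + g (y + u) := by
    simpa using (Fin.sum_univ_succ (g ∘ coordPath y u)).symm.trans (Fin.sum_univ_castSucc _)
  have hstep : ∑ k : Fin K, g (coordPath y u k.succ) ≤
      ∑ k : Fin K, (g (coordPath y u k.castSucc) +
        u k * pder g k (coordPath y u k.castSucc) + P k * u k ^ 2 / 2) := by
    refine sum_le_sum fun k _ => ?_
    rw [coordPath_succ]
    linarith [hL.apply_add_single_le hg k (coordPath y u k.castSucc) (u k)]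
  rw [sum_add_distrib, sum_add_distrib, ← sum_div] at hstep
  rw [weightedSqnorm]
  linarith

lemma exists_pder_coordPath_sub_eq_mulVec (hg : ContDiff ℝ 2 g) (y u : Fin K → ℝ) :
    ∃ ξ : Fin K → Fin K → ℝ, ∀ k : Fin K,
      pder g k (coordPath y u k.castSucc) - pder g k y = (Hmat g ξ).mulVec u k := by
  have hmean (k : Fin K) : ∃ z, pder g k (coordPath y u k.castSucc) - pder g k y =
      fderiv ℝ (pder g k) z (coordPath y u k.castSucc - y) := by
    obtain ⟨z, -, hz⟩ := domain_mvt
      (fun z _ => ((differentiable_pder hg k) z).hasFDerivAt.hasFDerivWithinAt)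
      convex_univ (Set.mem_univ y) (Set.mem_univ (coordPath y u k.castSucc))
    exact ⟨z, hz⟩
  choose ξ hξ using hmean
  refine ⟨ξ, fun k => ?_⟩
  rw [hξ, fderiv_apply_eq_dotProduct]
  refine sum_congr rfl fun j _ => ?_
  have hcomm : pder (pder g k) j (ξ k) = pder2 g k j (ξ k) := pder2_comm hg.contDiffAt j k
  beta_reduce
  rw [hcomm]
  by_cases hjk : j < k
  · simp [coordPath, Hmat, hjk, mul_comm]
  · simp [coordPath, Hmat, hjk]

lemma pder_eq_zero_of_forall_le {y : Fin K → ℝ} (hy : ∀ z, g y ≤ g z) (k : Fin K) :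
    pder g k y = 0 := by
  have hmin : IsLocalMin g y := Filter.Eventually.of_forall hy
  simp [pder, hmin.fderiv_eq_zero]

/-- A nonpositive constant would make `g` constant along a coordinate line through a minimizer. -/
lemma CoordLipschitz.pos_of_bounded_minimizers {P : Fin K → ℝ} (hL : CoordLipschitz g P)
    (hg : Differentiable ℝ g) {y z : Fin K → ℝ} (hy : ∀ y', g y ≤ g y') {R : ℝ}
    (hR : ∀ y, (∀ y', g y ≤ g y') → √(sqnorm (z - y)) ≤ R) (k : Fin K) : 0 < P k := by
  by_contra! hPk
  have hmin (t : ℝ) : ∀ y', g (y + t • (Pi.single k 1 : Fin K → ℝ)) ≤ g y' := fun y' => by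
    have h := hL.apply_add_single_le hg k y t
    rw [pder_eq_zero_of_forall_le hy k] at h
    linarith [hy y', mul_nonpos_of_nonpos_of_nonneg hPk (sq_nonneg t)]
  have hfar : |R| + 1 ≤
      √(sqnorm (z - (y + (z k - y k - (|R| + 1)) • (Pi.single k 1 : Fin K → ℝ)))) := by
    refine Real.le_sqrt_of_sq_le (le_trans (le_of_eq ?_) (sq_le_sqnorm _ k))
    simp only [Pi.sub_apply, Pi.add_apply, Pi.smul_apply, Pi.single_eq_same, smul_eq_mul]
    ring
  linarith [hR _ (hmin (z k - y k - (|R| + 1))), le_abs_self R]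

lemma CoordLipschitz.sub_le_of_forall_le {P : Fin K → ℝ} (hL : CoordLipschitz g P)
    (hg : ContDiff ℝ 2 g) {β : ℝ} (hβ : ∀ ξ, specNorm (Hmat g ξ) ≤ β) {y : Fin K → ℝ}
    (hy : ∀ z, g y ≤ g z) (x : Fin K → ℝ) :
    g x - g y ≤ weightedSqnorm P (x - y) / 2 + β * sqnorm (x - y) := by
  obtain ⟨ξ, hξ⟩ := exists_pder_coordPath_sub_eq_mulVec hg y (x - y)
  simp only [pder_eq_zero_of_forall_le hy, sub_zero] at hξ
  have hpath := hL.apply_add_le_sum_coordPath (hg.differentiable (by norm_num)) y (x - y)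
  simp only [hξ, add_sub_cancel] at hpath
  have hcross : (x - y) ⬝ᵥ (Hmat g ξ).mulVec (x - y) ≤ β * sqnorm (x - y) :=
    calc (x - y) ⬝ᵥ (Hmat g ξ).mulVec (x - y)
        ≤ specNorm (Hmat g ξ) * √(sqnorm (x - y)) * √(sqnorm (x - y)) :=
          (le_abs_self _).trans (abs_dotProduct_mulVec_le _ _ _)
      _ = specNorm (Hmat g ξ) * sqnorm (x - y) := by
          rw [mul_assoc, Real.mul_self_sqrt (sqnorm_nonneg _)]
      _ ≤ β * sqnorm (x - y) := mul_le_mul_of_nonneg_right (hβ ξ) (sqnorm_nonneg _)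
  rw [dotProduct] at hcross
  linarith

end Calculus

namespace CGDCycle

variable {K : ℕ} {g : (Fin K → ℝ) → ℝ} {P x x' : Fin K → ℝ} {w : Fin (K + 1) → Fin K → ℝ}

lemma eq_coordPath (h : CGDCycle g P x w x') : w = coordPath x (x' - x) := by
  obtain ⟨hzero, hsucc, hlast⟩ := h
  have hpath (k : Fin (K + 1)) :
      w k = coordPath x (fun k => -((P k)⁻¹ * pder g k (w k.castSucc))) k := by
    induction k using Fin.induction with
    | zero => rw [hzero, coordPath_zero]
    | succ k ih => rw [hsucc, coordPath_succ, ← ih, neg_smul, sub_eq_add_neg]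
  have hdiff : x' - x = fun k => -((P k)⁻¹ * pder g k (w k.castSucc)) := by
    rw [hlast, hpath, coordPath_last, add_sub_cancel_left]
  rw [hdiff]
  exact funext hpath

lemma pder_coordPath (h : CGDCycle g P x w x') {k : Fin K} (hP : P k ≠ 0) :
    pder g k (coordPath x (x' - x) k.castSucc) = -(P k * (x' - x) k) := by
  have hstep := h.2.1 k
  rw [h.eq_coordPath, coordPath_succ, sub_eq_add_neg _ (_ • _), ← neg_smul,
    add_right_inj] at hstep
  have hcoord := congrFun hstep k
  simp only [Pi.smul_apply, Pi.single_eq_same, smul_eq_mul, mul_one] at hcoord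
  rw [hcoord, mul_neg, neg_neg, mul_inv_cancel_left₀ hP]

lemma weightedSqnorm_sub_le (h : CGDCycle g P x w x') (hL : CoordLipschitz g P)
    (hg : Differentiable ℝ g) (hP : ∀ k, P k ≠ 0) :
    weightedSqnorm P (x' - x) ≤ 2 * (g x - g x') := by
  have hpath := hL.apply_add_le_sum_coordPath hg x (x' - x)
  have hsum : ∑ k, (x' - x) k * pder g k (coordPath x (x' - x) k.castSucc) =
      -weightedSqnorm P (x' - x) := by
    rw [weightedSqnorm, ← sum_neg_distrib]
    refine sum_congr rfl fun k _ => ?_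
    rw [h.pder_coordPath (hP k)]
    ring
  rw [hsum, add_sub_cancel] at hpath
  linarith

lemma apply_le (h : CGDCycle g P x w x') (hL : CoordLipschitz g P)
    (hg : Differentiable ℝ g) (hP : ∀ k, 0 < P k) : g x' ≤ g x := by
  linarith [h.weightedSqnorm_sub_le hL hg fun k => (hP k).ne',
    weightedSqnorm_nonneg (fun k => (hP k).le) (x' - x)]

lemma exists_pder_eq (h : CGDCycle g P x w x') (hg : ContDiff ℝ 2 g) (hP : ∀ k, P k ≠ 0) :
    ∃ ξ, (pder g · x) = -(P * (x' - x)) - (Hmat g ξ).mulVec (x' - x) := by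
  obtain ⟨ξ, hξ⟩ := exists_pder_coordPath_sub_eq_mulVec hg x (x' - x)
  refine ⟨ξ, funext fun k => ?_⟩
  rw [Pi.sub_apply, Pi.neg_apply, Pi.mul_apply, ← hξ, h.pder_coordPath (hP k), sub_sub_cancel]

/-- Expanding `‖x' - y‖_P²` turns the part `-P u` of the gradient into a telescoping difference of
weighted distances; only the part `-H(ξ) u` is left to be estimated. -/
lemma sub_le (h : CGDCycle g P x w x') (hL : CoordLipschitz g P) (hg : ContDiff ℝ 2 g)
    (hgcv : ConvexOn ℝ Set.univ g) (hP : ∀ k, P k ≠ 0) {β : ℝ}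
    (hβ : ∀ ξ, specNorm (Hmat g ξ) ≤ β) (y : Fin K → ℝ) :
    g x' - g y ≤ (weightedSqnorm P (x - y) - weightedSqnorm P (x' - y)) / 2 +
      β * √(sqnorm (x - y)) * √(sqnorm (x' - x)) := by
  have hdiff : Differentiable ℝ g := hg.differentiable (by norm_num)
  obtain ⟨ξ, hξ⟩ := h.exists_pder_eq hg hP
  have hconvex := add_fderiv_le_of_convexOn hgcv (hdiff x) y
  rw [← neg_sub x y, map_neg, fderiv_apply_eq_dotProduct, hξ, dotProduct_sub,
    dotProduct_neg] at hconvex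
  have hexpand := weightedSqnorm_add P (x - y) (x' - x)
  rw [sub_add_sub_cancel'] at hexpand
  have hcross : -((x - y) ⬝ᵥ (Hmat g ξ).mulVec (x' - x)) ≤
      β * √(sqnorm (x - y)) * √(sqnorm (x' - x)) :=
    calc _ ≤ specNorm (Hmat g ξ) * √(sqnorm (x - y)) * √(sqnorm (x' - x)) :=
          (neg_le_abs _).trans (abs_dotProduct_mulVec_le _ _ _)
      _ ≤ β * √(sqnorm (x - y)) * √(sqnorm (x' - x)) := by
          gcongr
          exact hβ ξ
  linarith [h.weightedSqnorm_sub_le hL hdiff hP]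

lemma add_weightedSqnorm_le (h : CGDCycle g P x w x') (hL : CoordLipschitz g P)
    (hg : ContDiff ℝ 2 g) (hgcv : ConvexOn ℝ Set.univ g) {p β R : ℝ} (hp : 0 < p)
    (hpP : ∀ k, p ≤ P k) (hβ : ∀ ξ, specNorm (Hmat g ξ) ≤ β) {y : Fin K → ℝ}
    (hR : sqnorm (x - y) ≤ R ^ 2) :
    g x' - g y + weightedSqnorm P (x' - y) / 2 ≤
      weightedSqnorm P (x - y) / 2 + √(2 * (β ^ 2 * R ^ 2 / p) * (g x - g x')) := by
  have hP (k : Fin K) : P k ≠ 0 := (hp.trans_le (hpP k)).ne'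
  have hmove : sqnorm (x' - x) ≤ 2 * (g x - g x') / p := by
    rw [le_div_iff₀' hp]
    exact (le_weightedSqnorm hpP _).trans
      (h.weightedSqnorm_sub_le hL (hg.differentiable (by norm_num)) hP)
  have hcross : β * √(sqnorm (x - y)) * √(sqnorm (x' - x)) ≤
      √(2 * (β ^ 2 * R ^ 2 / p) * (g x - g x')) := by
    refine Real.le_sqrt_of_sq_le ?_
    calc (β * √(sqnorm (x - y)) * √(sqnorm (x' - x))) ^ 2
        = β ^ 2 * sqnorm (x - y) * sqnorm (x' - x) := by
          rw [mul_pow, mul_pow, Real.sq_sqrt (sqnorm_nonneg _), Real.sq_sqrt (sqnorm_nonneg _)]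
      _ ≤ β ^ 2 * R ^ 2 * (2 * (g x - g x') / p) := by
          have := sqnorm_nonneg (x' - x)
          gcongr
      _ = 2 * (β ^ 2 * R ^ 2 / p) * (g x - g x') := by ring
  linarith [h.sub_le hL hg hgcv hP hβ y]

end CGDCycle

section Recurrence

lemma mul_sqrt_two_mul_le {a δ t c : ℝ} (ha : 0 ≤ a) (hδ : 0 ≤ δ) (hc : 0 < c) :
    t * √(2 * a * δ) ≤ c * δ + t ^ 2 * a / (2 * c) := by
  refine le_of_sq_le_sq ?_ (by positivity)
  calc (t * √(2 * a * δ)) ^ 2 = 4 * (c * δ) * (t ^ 2 * a / (2 * c)) := by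
        rw [mul_pow, Real.sq_sqrt (by positivity)]
        field_simp
        ring
    _ ≤ (c * δ + t ^ 2 * a / (2 * c)) ^ 2 := four_mul_le_sq_add _ _

/-- Lyapunov function of the recurrence
`d' + v' / 2 ≤ v / 2 + √(2 l² C (d - d'))`, at the (shifted) time `m`.
The last summand telescopes to an upper bound for the harmonic sum of the Young errors `l² C / m`,
so that no logarithm appears. -/
noncomputable def lyapunov (l C m d v : ℝ) : ℝ :=
  m * (m + 1) / 2 * d + m / 2 * v + (1 + l ^ 2) ^ 2 / 2 * C / m

lemma sq_div_le_half_add (l : ℝ) {m : ℝ} (hm : 0 < m) :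
    l ^ 2 / m ≤ 1 / 2 + ((1 + l ^ 2) ^ 2 / 2 / m - (1 + l ^ 2) ^ 2 / 2 / (m + 1)) := by
  have hdiff : 1 / 2 + ((1 + l ^ 2) ^ 2 / 2 / m - (1 + l ^ 2) ^ 2 / 2 / (m + 1)) - l ^ 2 / m =
      (m * (m + 1) + (1 + l ^ 2) ^ 2 - 2 * l ^ 2 * (m + 1)) / (2 * m * (m + 1)) := by
    field_simp
    ring
  have hnum : 0 ≤ m * (m + 1) + (1 + l ^ 2) ^ 2 - 2 * l ^ 2 * (m + 1) := by
    nlinarith [sq_nonneg (m - l ^ 2)]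
  rw [← sub_nonneg, hdiff]
  positivity

lemma lyapunov_succ_le {l C m d v d' v' : ℝ} (hC : 0 ≤ C) (hm : 0 < m) (hd : d' ≤ d)
    (hv : v ≤ C) (h : d' + v' / 2 ≤ v / 2 + √(2 * (l ^ 2 * C) * (d - d'))) :
    lyapunov l C (m + 1) d' v' ≤ lyapunov l C m d v + (1 + l ^ 2) * C := by
  have hyoung := mul_sqrt_two_mul_le (a := l ^ 2 * C) (t := m + 1) (c := m * (m + 1) / 2)
    (by positivity) (sub_nonneg.mpr hd) (by positivity)
  have herror : (m + 1) ^ 2 * (l ^ 2 * C) / (2 * (m * (m + 1) / 2)) =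
      (l ^ 2 + l ^ 2 / m) * C := by
    field_simp
  have htelescope := mul_le_mul_of_nonneg_right (sq_div_le_half_add l hm) hC
  have hscaled := mul_le_mul_of_nonneg_left h (by positivity : 0 ≤ m + 1)
  rw [herror] at hyoung
  simp only [lyapunov, mul_div_right_comm _ C]
  linarith

lemma lyapunov_start_le {l C d v : ℝ} (hC : 0 ≤ C) (hl : 0 ≤ l) (hd : d ≤ (1 / 2 + l) * C)
    (hv : v ≤ C) : lyapunov l C (1 + l) d v ≤ (2 * l + 3) * (1 + l ^ 2) * C := by
  have hcorrection : (1 + l ^ 2) ^ 2 / 2 / (1 + l) ≤ (1 + l ^ 2) * (1 + l) / 2 := by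
    rw [div_le_iff₀ (by positivity)]
    nlinarith [mul_nonneg (by positivity : 0 ≤ 1 + l ^ 2) hl]
  have hcoeff : (1 + l) * (1 + l + 1) / 2 * (1 / 2 + l) + (1 + l) / 2 +
      (1 + l ^ 2) ^ 2 / 2 / (1 + l) ≤ (2 * l + 3) * (1 + l ^ 2) := by
    nlinarith [pow_nonneg hl 3, sq_nonneg (l - 1)]
  calc lyapunov l C (1 + l) d v
      ≤ (1 + l) * (1 + l + 1) / 2 * ((1 / 2 + l) * C) + (1 + l) / 2 * C +
          (1 + l ^ 2) ^ 2 / 2 * C / (1 + l) := by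
        rw [lyapunov]
        gcongr
    _ = ((1 + l) * (1 + l + 1) / 2 * (1 / 2 + l) + (1 + l) / 2 +
          (1 + l ^ 2) ^ 2 / 2 / (1 + l)) * C := by ring
    _ ≤ (2 * l + 3) * (1 + l ^ 2) * C := mul_le_mul_of_nonneg_right hcoeff hC

lemma le_div_of_sqrt_recurrence {C l : ℝ} (hC : 0 ≤ C) (hl : 0 ≤ l) {D V : ℕ → ℝ}
    (hD : Antitone D) (hV : ∀ r, V r ∈ Set.Icc 0 C) (hD0 : D 0 ≤ (1 / 2 + l) * C)
    (hstep : ∀ r, D (r + 1) + V (r + 1) / 2 ≤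
      V r / 2 + √(2 * (l ^ 2 * C) * (D r - D (r + 1))))
    {n : ℕ} (hn : 1 ≤ n) : D n ≤ 2 * (1 + l ^ 2) * C / n := by
  have hlyapunov (n : ℕ) : lyapunov l C (n + (1 + l)) (D n) (V n) ≤
      (n + (2 * l + 3)) * (1 + l ^ 2) * C := by
    induction n with
    | zero => simpa using lyapunov_start_le hC hl hD0 (hV 0).2
    | succ n ih =>
      have h := lyapunov_succ_le hC (by positivity : 0 < n + (1 + l)) (hD n.le_succ) (hV n).2
        (hstep n)
      rw [add_right_comm] at h
      push_cast
      linarith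
  have hnpos : (0 : ℝ) < n := by exact_mod_cast hn
  have hweight : (n + (1 + l)) * (n + (1 + l) + 1) / 2 * D n ≤
      (n + (2 * l + 3)) * (1 + l ^ 2) * C := by
    have hrest : 0 ≤ (n + (1 + l)) / 2 * V n + (1 + l ^ 2) ^ 2 / 2 * C / (n + (1 + l)) := by
      have := (hV n).1
      positivity
    have h := hlyapunov n
    rw [lyapunov] at h
    linarith
  have hquadratic : n * (n + (2 * l + 3)) ≤ (n + (1 + l)) * (n + (1 + l) + 1) := by
    nlinarith
  rw [le_div_iff₀ hnpos]
  refine le_of_mul_le_mul_left ?_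
    (by positivity : 0 < ((n : ℝ) + (1 + l)) * (n + (1 + l) + 1) / 2)
  calc (n + (1 + l)) * (n + (1 + l) + 1) / 2 * (D n * n)
      = n * ((n + (1 + l)) * (n + (1 + l) + 1) / 2 * D n) := by ring
    _ ≤ n * ((n + (2 * l + 3)) * (1 + l ^ 2) * C) := by gcongr
    _ = n * (n + (2 * l + 3)) * ((1 + l ^ 2) * C) := by ring
    _ ≤ (n + (1 + l)) * (n + (1 + l) + 1) * ((1 + l ^ 2) * C) := by gcongr
    _ = (n + (1 + l)) * (n + (1 + l) + 1) / 2 * (2 * (1 + l ^ 2) * C) := by ring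

end Recurrence

theorem CGDCycle.apply_sub_le_div {K : ℕ} {g : (Fin K → ℝ) → ℝ} {P : Fin K → ℝ}
    (hL : CoordLipschitz g P) (hg : ContDiff ℝ 2 g) (hgcv : ConvexOn ℝ Set.univ g)
    {p q β R : ℝ} (hp : 0 < p) (hpq : p ≤ q) (hpP : ∀ k, p ≤ P k) (hPq : ∀ k, P k ≤ q)
    (hβ : ∀ ξ, specNorm (Hmat g ξ) ≤ β) {y : Fin K → ℝ} (hy : ∀ z, g y ≤ g z)
    {x : ℕ → Fin K → ℝ} {w : ℕ → Fin (K + 1) → Fin K → ℝ}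
    (hx : ∀ r, CGDCycle g P (x r) (w r) (x (r + 1))) (hR : ∀ r, sqnorm (x r - y) ≤ R ^ 2)
    {r : ℕ} (hr : 1 ≤ r) : g (x r) - g y ≤ 2 * (q + β ^ 2 / p) * R ^ 2 / r := by
  have hq : 0 < q := hp.trans_le hpq
  have hP (k : Fin K) : 0 < P k := hp.trans_le (hpP k)
  have hβ0 : 0 ≤ β := (specNorm_nonneg _).trans (hβ 0)
  have hl : (β / √(p * q)) ^ 2 = β ^ 2 / (p * q) := by rw [div_pow, Real.sq_sqrt (by positivity)]
  have hβl : β ≤ β / √(p * q) * q := by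
    rw [div_mul_eq_mul_div, le_div_iff₀ (by positivity)]
    gcongr
    exact (Real.sqrt_le_left hq.le).mpr (by nlinarith)
  have hV (r : ℕ) : weightedSqnorm P (x r - y) ≤ q * R ^ 2 :=
    (weightedSqnorm_le hPq _).trans (mul_le_mul_of_nonneg_left (hR r) hq.le)
  have hanti : Antitone fun r => g (x r) - g y := antitone_nat_of_succ_le fun r =>
    sub_le_sub_right ((hx r).apply_le hL (hg.differentiable (by norm_num)) hP) _
  have hinit : g (x 0) - g y ≤ (1 / 2 + β / √(p * q)) * (q * R ^ 2) := by
    have hcross : β * sqnorm (x 0 - y) ≤ β / √(p * q) * q * R ^ 2 :=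
      mul_le_mul hβl (hR 0) (sqnorm_nonneg _) (by positivity)
    linarith [hL.sub_le_of_forall_le hg hβ hy (x 0), hV 0]
  have hstep (r : ℕ) := (hx r).add_weightedSqnorm_le hL hg hgcv hp hpP hβ (hR r)
  have hscale : β ^ 2 * R ^ 2 / p = (β / √(p * q)) ^ 2 * (q * R ^ 2) := by
    rw [hl]
    field_simp
  refine (le_div_of_sqrt_recurrence (C := q * R ^ 2) (l := β / √(p * q)) (by positivity)
    (by positivity) hanti (fun r => ⟨weightedSqnorm_nonneg (fun k => (hP k).le) _, hV r⟩)
    hinit (fun r => ?_) hr).trans_eq ?_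
  · simpa only [hscale, sub_sub_sub_cancel_right] using hstep r
  · rw [hl]
    field_simp

/-- Theorem 3, meta iteration complexity of cyclic CGD: if
`‖H(ξ)‖ ≤ β` for every choice of `ξ`, then
`g(x^{(r)}) − g(x*) ≤ 2 (P_max + β²/P_min) R_0² / r` for all `r ≥ 1`. -/
theorem cgd_rate_meta {K : ℕ} (hK : 1 ≤ K)
    (g : (Fin K → ℝ) → ℝ) (hg : ContDiff ℝ 2 g) (hgcv : ConvexOn ℝ Set.univ g)
    (L : Fin K → ℝ)
    (hLip : ∀ (k : Fin K) (x : Fin K → ℝ) (t : ℝ),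
      |pder g k (x + t • (Pi.single k 1 : Fin K → ℝ)) - pder g k x| ≤ L k * |t|)
    (P : Fin K → ℝ) (hP : ∀ k, L k ≤ P k)
    (xstar : Fin K → ℝ) (hxstar : ∀ y : Fin K → ℝ, g xstar ≤ g y)
    (β : ℝ) (hβ : ∀ ξ : Fin K → Fin K → ℝ, specNorm (Hmat g ξ) ≤ β)
    (x : ℕ → Fin K → ℝ) (w : ℕ → Fin (K + 1) → Fin K → ℝ)
    (hcycle : ∀ r : ℕ, CGDCycle g P (x r) (w r) (x (r + 1)))
    (R0 : ℝ)
    (hR0 : ∀ z : Fin K → ℝ, g z ≤ g (x 0) →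
      ∀ y : Fin K → ℝ, (∀ y' : Fin K → ℝ, g y ≤ g y') →
        Real.sqrt (sqnorm (z - y)) ≤ R0)
    (r : ℕ) (hr : 1 ≤ r) :
    g (x r) - g xstar ≤
      2 * (maxOf hK P + β ^ 2 / minOf hK P) * R0 ^ 2 / r := by
  have hL : CoordLipschitz g P := CoordLipschitz.mono hLip hP
  have hdiff : Differentiable ℝ g := hg.differentiable (by norm_num)
  have hPpos (k : Fin K) : 0 < P k :=
    hL.pos_of_bounded_minimizers hdiff hxstar (hR0 (x 0) le_rfl) k
  have hminP (k : Fin K) : minOf hK P ≤ P k := inf'_le P (mem_univ k)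
  have hmaxP (k : Fin K) : P k ≤ maxOf hK P := le_sup' P (mem_univ k)
  have hmin : 0 < minOf hK P := (lt_inf'_iff _).mpr fun k _ => hPpos k
  have hdescent : Antitone (g ∘ x) :=
    antitone_nat_of_succ_le fun r => (hcycle r).apply_le hL hdiff hPpos
  have hdist (r : ℕ) : sqnorm (x r - xstar) ≤ R0 ^ 2 :=
    (Real.sqrt_le_iff.mp (hR0 (x r) (hdescent r.zero_le) xstar hxstar)).2
  exact CGDCycle.apply_sub_le_div hL hg hgcv hmin ((hminP ⟨0, hK⟩).trans (hmaxP ⟨0, hK⟩))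
    hminP hmaxP hβ hxstar hcycle hdist hr
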